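/- For a k-uniform hypertree T with vertex u, an edge e containing u, and a vector p with all nonzero coordinates satisfying the eigenvalue equations of T with x_u=1 at parameter λ, one has Π_{v ∈ e∖{u}} p_v = φ_{T−e}(λ)/φ_{T−u}(λ). -/

import Mathlib

/-!
Root the hypertree at `u`. For a vertex `w ≠ u` let `T_w` be the subtree hanging at `w`, away from
the edge `e` joining `w` to its parent, and write `p_f = ∏ v ∈ f, p v`. Multiplying the eigenvalue
equation at `w` by `p w` gives `λ p_w ^ k = p_e + ∑ p_f`, the sum being over the edges `f` of `T_w`
at `w`. With the expansion of `φ` at a vertex, induction yields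
`p_e φ(T_w - w) = p_w ^ k φ(T_w)`, which also shows that `φ(T_w) ≠ 0`. Taking the product over
`w ∈ e ∖ {u}` gives `p_u ^ k ∏ φ(T_w - w) = p_e ∏ φ(T_w)`, and the branches at `u` that avoid `e`
contribute the same factor to `φ(T - e)` and to `φ(T - u)`.

The induction runs over `RootedHypertree`, which builds a rooted hypertree by gluing a new edge at
the root with a rooted hypertree hanging at each of its other vertices; `IsHypertree.rooted` says
that a hypertree can be rooted at any vertex. The matching polynomial enters through `matchSum`
only by deletion of an edge (`matchSum_insert`) and multiplicativity over disjoint unions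
(`matchSum_union`, `matchSum_biUnion`).
-/


/-- A set of edges is a matching if its edges are pairwise disjoint. -/
def IsHyperMatching {γ : Type*} (M : Finset (Finset γ)) : Prop :=
  ∀ e ∈ M, ∀ f ∈ M, e ≠ f → Disjoint e f

open Classical in
/-- `mCount E t` is the number of `t`-matchings of the hypergraph with edge set `E`. -/
noncomputable def mCount {γ : Type*} (E : Finset (Finset γ)) (t : ℕ) : ℕ :=
  (E.powerset.filter (fun M => M.card = t ∧ IsHyperMatching M)).card

/-- The matching polynomial `φ_H(λ) = ∑_t (-1)^t m_t(H) λ^(n - t k)` evaluated at `z : ℂ`. -/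
noncomputable def mPolyC {γ : Type*} (n k : ℕ) (E : Finset (Finset γ)) (z : ℂ) : ℂ :=
  ∑ t ∈ Finset.range (E.card + 1), (-1 : ℂ) ^ t * (mCount E t : ℂ) * z ^ (n - t * k)

/-- A `k`-uniform hypertree on vertex set `V` with edge set `E`. -/
inductive IsHypertree {α : Type*} [DecidableEq α] (k : ℕ) : Finset α → Finset (Finset α) → Prop
  | single (v : α) : IsHypertree k {v} ∅
  | attach {V : Finset α} {E : Finset (Finset α)} (e : Finset α) :
      IsHypertree k V E → e.card = k → (e ∩ V).card = 1 →
      IsHypertree k (V ∪ e) (insert e E)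

/-! ### The matching polynomial as a sum over matchings -/

open Classical in
/-- The matching polynomial as a sum over matchings `M` of `(-1) ^ |M| z ^ m`, where `m` is the
number of vertices of `V` not covered by `M`. Counting uncovered vertices avoids the truncated
subtraction in `mPolyC`; the two agree for uniform hypergraphs. -/
noncomputable def matchSum {α : Type*} [DecidableEq α] (V : Finset α) (E : Finset (Finset α))
    (z : ℂ) : ℂ :=
  ∑ M ∈ E.powerset,
    if IsHyperMatching M then (-1 : ℂ) ^ M.card * z ^ (V \ M.biUnion id).card else 0

theorem mPolyC_eq_matchSum {α : Type*} [DecidableEq α] (k : ℕ) (V : Finset α)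
    (E : Finset (Finset α)) (z : ℂ) (hk : ∀ e ∈ E, e.card = k) (hV : ∀ e ∈ E, e ⊆ V) :
    mPolyC V.card k E z = matchSum V E z := by
  classical
  have h1 : matchSum V E z = ∑ M ∈ E.powerset.filter (fun M => IsHyperMatching M),
      (-1 : ℂ) ^ M.card * z ^ (V.card - M.card * k) := by
    unfold matchSum
    rw [Finset.sum_filter]
    refine Finset.sum_congr rfl fun M hM => ?_
    split_ifs with h
    · rw [Finset.mem_powerset] at hM
      rw [Finset.card_sdiff_of_subset, Finset.card_biUnion, Finset.sum_const_nat (m := k)]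
      · exact fun x hx => hk x (hM hx)
      · exact fun x hx y hy hxy => h x hx y hy hxy
      · exact Finset.biUnion_subset.2 fun x hx => hV x (hM hx)
    · rfl
  rw [h1, mPolyC, ← Finset.sum_fiberwise_of_maps_to (t := Finset.range (E.card + 1))
    (g := Finset.card)]
  · refine Finset.sum_congr rfl fun t _ => ?_
    rw [Finset.sum_congr rfl (g := fun _ => (-1 : ℂ) ^ t * z ^ (V.card - t * k))]
    · rw [Finset.sum_const, nsmul_eq_mul, mCount, Finset.filter_filter]
      simp only [and_comm]
      ring
    · intro M hM
      rw [(Finset.mem_filter.1 hM).2]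
  · intro M hM
    have := Finset.card_le_card (Finset.mem_powerset.1 (Finset.mem_filter.1 hM).1)
    exact Finset.mem_range.2 (by omega)

theorem isHyperMatching_insert {α : Type*} [DecidableEq α] {e : Finset α}
    {M : Finset (Finset α)} (he : e ∉ M) :
    IsHyperMatching (insert e M) ↔ (∀ f ∈ M, Disjoint f e) ∧ IsHyperMatching M := by
  constructor
  · intro h
    refine ⟨fun f hf => h f (by simp [hf]) e (by simp) (fun h' => he (h' ▸ hf)), ?_⟩
    exact fun f hf g hg => h f (by simp [hf]) g (by simp [hg])
  · rintro ⟨h1, h2⟩ f hf g hg hfg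
    rw [Finset.mem_insert] at hf hg
    rcases hf with rfl | hf <;> rcases hg with rfl | hg
    · exact absurd rfl hfg
    · exact (h1 g hg).symm
    · exact h1 f hf
    · exact h2 f hf g hg hfg

/-- Deletion of an edge: `φ(H) = φ(H ∖ e) - φ(H - e)`. -/
theorem matchSum_insert {α : Type*} [DecidableEq α] (V : Finset α) (E : Finset (Finset α))
    (e : Finset α) (z : ℂ) (he : e ∉ E) :
    matchSum V (insert e E) z
      = matchSum V E z - matchSum (V \ e) (E.filter (fun f => Disjoint f e)) z := by
  classical
  unfold matchSum
  rw [Finset.sum_powerset_insert he, sub_eq_add_neg, ← Finset.sum_neg_distrib]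
  congr 1
  symm
  refine Finset.sum_subset_zero_on_sdiff ?_ ?_ ?_
  · exact Finset.powerset_mono.2 (Finset.filter_subset _ _)
  · intro M hM
    rw [Finset.mem_sdiff, Finset.mem_powerset, Finset.mem_powerset] at hM
    have heM : e ∉ M := fun h => he (hM.1 h)
    rw [if_neg]
    rw [isHyperMatching_insert heM]
    rintro ⟨h, -⟩
    exact hM.2 fun f hf => Finset.mem_filter.2 ⟨hM.1 hf, h f hf⟩
  · intro M hM
    rw [Finset.mem_powerset] at hM
    have heM : e ∉ M := fun h => he (Finset.mem_filter.1 (hM h)).1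
    have h : ∀ f ∈ M, Disjoint f e := fun f hf => (Finset.mem_filter.1 (hM hf)).2
    have hiff : IsHyperMatching (insert e M) ↔ IsHyperMatching M := by
      rw [isHyperMatching_insert heM]; exact and_iff_right h
    simp only [hiff]
    split_ifs
    · rw [Finset.card_insert_of_notMem heM, Finset.biUnion_insert, id, sdiff_sdiff_left]
      simp only [Finset.sup_eq_union]
      ring
    · simp

theorem matchSum_empty_left {α : Type*} [DecidableEq α] (V₁ V₂ : Finset α)
    (E : Finset (Finset α)) (z : ℂ) (hV : Disjoint V₁ V₂) (h : ∀ e ∈ E, e ⊆ V₂) :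
    matchSum (V₁ ∪ V₂) E z = z ^ V₁.card * matchSum V₂ E z := by
  classical
  unfold matchSum
  rw [Finset.mul_sum]
  refine Finset.sum_congr rfl fun M hM => ?_
  rw [Finset.mem_powerset] at hM
  have h2 : M.biUnion id ⊆ V₂ := Finset.biUnion_subset.2 fun x hx => h x (hM hx)
  have h3 : (V₁ ∪ V₂) \ M.biUnion id = V₁ ∪ (V₂ \ M.biUnion id) := by
    rw [Finset.union_sdiff_distrib, Finset.sdiff_eq_self_of_disjoint (hV.mono_right h2)]
  split_ifs
  · rw [h3, Finset.card_union_of_disjoint (hV.mono_right Finset.sdiff_subset)]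
    ring
  · simp

theorem matchSum_union {α : Type*} [DecidableEq α] (V₁ V₂ : Finset α)
    (E₁ E₂ : Finset (Finset α)) (z : ℂ) (hV : Disjoint V₁ V₂)
    (h₁ : ∀ e ∈ E₁, e ⊆ V₁ ∧ e.Nonempty) (h₂ : ∀ e ∈ E₂, e ⊆ V₂) :
    matchSum (V₁ ∪ V₂) (E₁ ∪ E₂) z = matchSum V₁ E₁ z * matchSum V₂ E₂ z := by
  induction hn : E₁.card using Nat.strong_induction_on generalizing V₁ E₁ with
  | _ n ih =>
  rcases E₁.eq_empty_or_nonempty with rfl | ⟨e, he⟩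
  · rw [Finset.empty_union, matchSum_empty_left _ _ _ _ hV h₂]
    congr 1
    simp [matchSum, IsHyperMatching]
  · obtain ⟨E, heE, rfl⟩ : ∃ E, e ∉ E ∧ insert e E = E₁ :=
      ⟨E₁.erase e, Finset.notMem_erase e E₁, Finset.insert_erase he⟩
    obtain ⟨heV, x, hx⟩ := h₁ e he
    have hd : ∀ f ∈ E₂, Disjoint f e := fun f hf =>
      (hV.mono heV (h₂ f hf)).symm
    have heE₂ : e ∉ E₂ := fun h => Finset.disjoint_left.1 (hd e h) hx hx
    have hcard : (insert e E).card = E.card + 1 := Finset.card_insert_of_notMem heE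
    have e1 : (V₁ ∪ V₂) \ e = (V₁ \ e) ∪ V₂ := by
      rw [Finset.union_sdiff_distrib,
        Finset.sdiff_eq_self_of_disjoint (hV.mono_left heV).symm]
    have e2 : (E ∪ E₂).filter (fun f => Disjoint f e)
        = E.filter (fun f => Disjoint f e) ∪ E₂ := by
      rw [Finset.filter_union, Finset.filter_true_of_mem hd]
    rw [Finset.insert_union, matchSum_insert _ _ _ _ (by simp [heE, heE₂]),
      matchSum_insert _ _ _ _ heE, e1, e2,
      ih E.card (by omega) V₁ E hV (fun f hf => h₁ f (by simp [hf])) rfl,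
      ih (E.filter (fun f => Disjoint f e)).card ?_ (V₁ \ e) _
        (hV.mono_left Finset.sdiff_subset) ?_ rfl]
    · ring
    · have := Finset.card_filter_le E (fun f => Disjoint f e)
      omega
    · intro f hf
      rw [Finset.mem_filter] at hf
      have := h₁ f (by simp [hf.1])
      exact ⟨Finset.subset_sdiff.2 ⟨this.1, hf.2⟩, this.2⟩

theorem matchSum_biUnion {α ι : Type*} [DecidableEq α] [DecidableEq ι] (s : Finset ι)
    (W : ι → Finset α)
    (F : ι → Finset (Finset α)) (z : ℂ)
    (hW : ∀ i ∈ s, ∀ j ∈ s, i ≠ j → Disjoint (W i) (W j))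
    (hF : ∀ i ∈ s, ∀ e ∈ F i, e ⊆ W i ∧ e.Nonempty) :
    matchSum (s.biUnion W) (s.biUnion F) z = ∏ i ∈ s, matchSum (W i) (F i) z := by
  induction s using Finset.induction_on with
  | empty => simp [matchSum, IsHyperMatching]
  | insert a s ha ih =>
    rw [Finset.biUnion_insert, Finset.biUnion_insert, Finset.prod_insert ha, matchSum_union, ih]
    · exact fun i hi j hj => hW i (by simp [hi]) j (by simp [hj])
    · exact fun i hi => hF i (by simp [hi])
    · rw [Finset.disjoint_biUnion_right]
      exact fun i hi => hW a (by simp) i (by simp [hi]) (fun h => ha (h ▸ hi))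
    · exact hF a (by simp)
    · intro e he
      obtain ⟨i, hi, he⟩ := Finset.mem_biUnion.1 he
      exact (hF i (by simp [hi]) e he).1.trans (Finset.subset_biUnion_of_mem W hi)

/-! ### Rooted hypertrees -/

/-- `RootedHypertree k u V E`: the hypergraph `(V, E)` is a `k`-uniform hypertree rooted at `u`. The
constructor `glue` adds to a tree rooted at `u` a new edge `e` at `u`, with a tree
`(W w, F w)` rooted at each other vertex `w` of `e`. -/
inductive RootedHypertree {α : Type*} [DecidableEq α] (k : ℕ) :
    α → Finset α → Finset (Finset α) → Prop
  | single (u : α) : RootedHypertree k u {u} ∅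
  | glue {u : α} {V : Finset α} {E : Finset (Finset α)} (e : Finset α) (W : α → Finset α)
      (F : α → Finset (Finset α)) :
      RootedHypertree k u V E → u ∈ e → e.card = k →
      (∀ w ∈ e.erase u, RootedHypertree k w (W w) (F w)) →
      (∀ w ∈ e.erase u, Disjoint V (W w)) →
      (∀ w ∈ e.erase u, ∀ w' ∈ e.erase u, w ≠ w' → Disjoint (W w) (W w')) →
      RootedHypertree k u (V ∪ (e.erase u).biUnion W) (insert e (E ∪ (e.erase u).biUnion F))

theorem RootedHypertree.root_mem {α : Type*} [DecidableEq α] {k : ℕ} {u : α} {V : Finset α}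
    {E : Finset (Finset α)} (h : RootedHypertree k u V E) : u ∈ V := by
  induction h with
  | single u => simp
  | glue e W F _ _ _ _ _ _ ih _ => exact Finset.mem_union_left _ ih

theorem RootedHypertree.edge {α : Type*} [DecidableEq α] {k : ℕ} {u : α} {V : Finset α}
    {E : Finset (Finset α)} (h : RootedHypertree k u V E) :
    ∀ f ∈ E, f ⊆ V ∧ f.Nonempty := by
  induction h with
  | single u => simp
  | @glue u V E e W F h hu hk hW hd hdd ih ihW =>
    intro f hf
    rw [Finset.mem_insert, Finset.mem_union, Finset.mem_biUnion] at hf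
    rcases hf with rfl | hf | ⟨w, hw, hf⟩
    · refine ⟨fun x hx => ?_, ⟨u, hu⟩⟩
      by_cases hxu : x = u
      · subst hxu; exact Finset.mem_union_left _ h.root_mem
      · have hx' : x ∈ f.erase u := Finset.mem_erase.2 ⟨hxu, hx⟩
        exact Finset.mem_union_right _ (Finset.mem_biUnion.2 ⟨x, hx', (hW x hx').root_mem⟩)
    · exact ⟨(ih f hf).1.trans Finset.subset_union_left, (ih f hf).2⟩
    · exact ⟨(ihW w hw f hf).1.trans ((Finset.subset_biUnion_of_mem W hw).trans
        Finset.subset_union_right), (ihW w hw f hf).2⟩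

/-- A leaf edge `e` attached at any vertex `v` keeps the hypertree rooted at `u`. -/
theorem RootedHypertree.attach {α : Type*} [DecidableEq α] {k : ℕ} {u : α} {V : Finset α}
    {E : Finset (Finset α)} (h : RootedHypertree k u V E) :
    ∀ (e : Finset α) (v : α), e.card = k → e ∩ V = {v} →
      RootedHypertree k u (V ∪ e) (insert e E) := by
  induction h with
  | single u =>
    intro e v hk hv
    have hue : u ∈ e := by
      have : v ∈ e ∩ {u} := by simp [hv]
      rw [Finset.mem_inter, Finset.mem_singleton] at this
      exact this.2 ▸ this.1
    have := RootedHypertree.glue (k := k) e (fun w => {w}) (fun _ => ∅) (.single u) hue hk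
      (fun w _ => .single w) 
      (fun w hw => by simpa using (Finset.ne_of_mem_erase hw).symm)
      (fun w _ w' _ hww => by simpa using hww)
    convert this using 1
    · ext x; simp; grind
    · ext x; simp
  | @glue u V E e₀ W F h hu hk₀ hW hd hdd ih ihW =>
    intro e v hk hv
    have hmem : v ∈ e ∩ (V ∪ (e₀.erase u).biUnion W) := by simp [hv]
    have hout : ∀ x ∈ e, x ∈ V ∪ (e₀.erase u).biUnion W → x = v := fun x h1 h2 => by
      have : x ∈ e ∩ (V ∪ (e₀.erase u).biUnion W) := Finset.mem_inter.2 ⟨h1, h2⟩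
      simpa [hv] using this
    obtain ⟨hve, hvV⟩ := Finset.mem_inter.1 hmem
    rcases Finset.mem_union.1 hvV with hvV | hvW
    · have h1 : e ∩ V = {v} := by
        ext x
        rw [Finset.mem_inter, Finset.mem_singleton]
        exact ⟨fun hx => hout x hx.1 (Finset.mem_union_left _ hx.2), fun hx => hx ▸ ⟨hve, hvV⟩⟩
      have := RootedHypertree.glue e₀ W F (ih e v hk h1) hu hk₀ hW ?_ hdd
      · convert this using 1
        · ext x; simp only [Finset.mem_union]; tauto
        · ext x; simp only [Finset.mem_union, Finset.mem_insert]; tauto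
      · intro w hw
        rw [Finset.disjoint_union_left]
        refine ⟨hd w hw, Finset.disjoint_left.2 fun x hx hxW => ?_⟩
        have := hout x hx (Finset.mem_union_right _ (Finset.mem_biUnion.2 ⟨w, hw, hxW⟩))
        exact Finset.disjoint_left.1 (hd w hw) hvV (this ▸ hxW)
    · obtain ⟨w₀, hw₀, hvW⟩ := Finset.mem_biUnion.1 hvW
      have h1 : e ∩ W w₀ = {v} := by
        ext x
        rw [Finset.mem_inter, Finset.mem_singleton]
        exact ⟨fun hx => hout x hx.1
          (Finset.mem_union_right _ (Finset.mem_biUnion.2 ⟨w₀, hw₀, hx.2⟩)),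
          fun hx => hx ▸ ⟨hve, hvW⟩⟩
      have hVe : Disjoint V e := Finset.disjoint_left.2 fun x hx hxe =>
        Finset.disjoint_left.1 (hd w₀ hw₀) hx
          (hout x hxe (Finset.mem_union_left _ hx) ▸ hvW)
      have hWe : ∀ w ∈ e₀.erase u, w ≠ w₀ → Disjoint (W w) e := fun w hw hne =>
        Finset.disjoint_left.2 fun x hx hxe =>
          Finset.disjoint_left.1 (hdd w hw w₀ hw₀ hne) hx
            (hout x hxe (Finset.mem_union_right _ (Finset.mem_biUnion.2 ⟨w, hw, hx⟩)) ▸ hvW)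
      have := RootedHypertree.glue e₀ (Function.update W w₀ (W w₀ ∪ e))
        (Function.update F w₀ (insert e (F w₀))) h hu hk₀ ?_ ?_ ?_
      · convert this using 1
        · ext x
          simp only [Finset.mem_union, Finset.mem_biUnion, Function.update_apply]
          grind
        · ext x
          simp only [Finset.mem_union, Finset.mem_insert, Finset.mem_biUnion,
            Function.update_apply]
          grind
      · intro w hw
        by_cases hne : w = w₀
        · subst hne
          simpa using ihW w hw e v hk h1
        · simpa [hne] using hW w hw
      · intro w hw
        by_cases hne : w = w₀
        · subst hne
          simpa using ⟨hd w hw, hVe⟩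
        · simpa [hne] using hd w hw
      · intro w hw w' hw' hww
        by_cases hne : w = w₀
        · subst hne
          rw [Function.update_self, Function.update_of_ne hww.symm, Finset.disjoint_union_left]
          exact ⟨hdd w hw w' hw' hww, (hWe w' hw' hww.symm).symm⟩
        · rw [Function.update_of_ne hne]
          by_cases hne' : w' = w₀
          · subst hne'
            rw [Function.update_self, Finset.disjoint_union_right]
            exact ⟨hdd w hw w' hw' hww, hWe w hw hne⟩
          · rw [Function.update_of_ne hne']
            exact hdd w hw w' hw' hww

/-- A hypertree can be rooted at any of its vertices. -/
theorem IsHypertree.rooted {α : Type*} [DecidableEq α] {k : ℕ} {V : Finset α}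
    {E : Finset (Finset α)} (h : IsHypertree k V E) : ∀ u ∈ V, RootedHypertree k u V E := by
  induction h with
  | single v =>
    intro u hu
    rw [Finset.mem_singleton] at hu
    exact hu ▸ .single u
  | @attach V E e h hk hc ih =>
    intro u hu
    obtain ⟨v, hv⟩ := Finset.card_eq_one.1 hc
    by_cases huV : u ∈ V
    · exact (ih u huV).attach e v hk hv
    · have hue : u ∈ e := by simpa [huV] using hu
      have hmem : v ∈ e ∩ V := by simp [hv]
      obtain ⟨hve, hvV⟩ := Finset.mem_inter.1 hmem
      have hout : ∀ x ∈ e, x ∈ V → x = v := fun x h1 h2 => by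
        have : x ∈ e ∩ V := Finset.mem_inter.2 ⟨h1, h2⟩
        simpa [hv] using this
      have huv : v ≠ u := fun h => huV (h ▸ hvV)
      -- A new root `u` sees the edge `e` first, with the old tree hanging at `v`.
      have := RootedHypertree.glue (k := k) e (fun w => if w = v then V else {w})
        (fun w => if w = v then E else ∅) (.single u) hue hk ?_ ?_ ?_
      · convert this using 1
        · ext x
          simp only [Finset.mem_union, Finset.mem_biUnion, Finset.mem_singleton,
            Finset.mem_erase]
          grind
        · ext x
          simp only [Finset.mem_union, Finset.mem_insert, Finset.mem_biUnion,
            Finset.mem_erase]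
          grind
      · intro w hw
        by_cases hwv : w = v
        · subst hwv; simpa using ih w hvV
        · simpa [hwv] using RootedHypertree.single w
      · intro w hw
        rw [Finset.disjoint_singleton_left]
        grind
      · intro w hw w' hw' hww
        rw [Finset.disjoint_left]
        grind

/-! ### The eigenvalue equations on a rooted hypertree -/

theorem matchSum_union_biUnion {α : Type*} [DecidableEq α] (s : Finset α) (V V' : Finset α)
    (E : Finset (Finset α)) (W W' : α → Finset α) (F : α → Finset (Finset α)) (z : ℂ)
    (hVW : ∀ w ∈ s, Disjoint V (W w))
    (hWW : ∀ w ∈ s, ∀ w' ∈ s, w ≠ w' → Disjoint (W w) (W w'))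
    (hV : V' ⊆ V) (hW : ∀ w ∈ s, W' w ⊆ W w)
    (hE : ∀ f ∈ E, f ⊆ V' ∧ f.Nonempty) (hF : ∀ w ∈ s, ∀ f ∈ F w, f ⊆ W' w ∧ f.Nonempty) :
    matchSum (V' ∪ s.biUnion W') (E ∪ s.biUnion F) z
      = matchSum V' E z * ∏ w ∈ s, matchSum (W' w) (F w) z := by
  rw [matchSum_union _ _ _ _ _ _ hE, matchSum_biUnion _ _ _ _ _ hF]
  · exact fun w hw w' hw' hne => (hWW w hw w' hw' hne).mono (hW w hw) (hW w' hw')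
  · intro f hf
    obtain ⟨w, hw, hf⟩ := Finset.mem_biUnion.1 hf
    exact (hF w hw f hf).1.trans (Finset.subset_biUnion_of_mem W' hw)
  · rw [Finset.disjoint_biUnion_right]
    exact fun w hw => (hVW w hw).mono hV (hW w hw)

/-- The statement proved by induction on a rooted hypertree, with the eigenvalue equations
multiplied by `p v`, assumed only away from the root, and `p u` not normalized to `1`. The last conjunct is the sum of the
second one over the edges at `u`, rewritten with `λ φ(T - u) - φ(T) = ∑ φ(T - f)`. -/
theorem RootedHypertree.eigen {α : Type*} [DecidableEq α] {k : ℕ} (hk2 : 2 ≤ k) (z : ℂ)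
    (p : α → ℂ) {u : α} {V : Finset α} {E : Finset (Finset α)} (h : RootedHypertree k u V E) :
    (∀ v ∈ V, p v ≠ 0) →
    (∀ v ∈ V.erase u, z * p v ^ k = ∑ f ∈ E.filter (fun f => v ∈ f), ∏ w ∈ f, p w) →
    matchSum (V.erase u) (E.filter (fun f => u ∉ f)) z ≠ 0 ∧
    (∀ f ∈ E, u ∈ f → (∏ w ∈ f, p w) * matchSum (V.erase u) (E.filter (fun f => u ∉ f)) z
      = p u ^ k * matchSum (V \ f) (E.filter (fun g => Disjoint g f)) z) ∧
    (∑ f ∈ E.filter (fun f => u ∈ f), ∏ w ∈ f, p w)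
        * matchSum (V.erase u) (E.filter (fun f => u ∉ f)) z
      = p u ^ k * (z * matchSum (V.erase u) (E.filter (fun f => u ∉ f)) z - matchSum V E z) := by
  induction h with
  | single u =>
    intro _ _
    simp [matchSum, IsHyperMatching]
  | @glue u V E e W F h hu hk hW hd hdd ih ihW =>
    intro hp heig
    set s := e.erase u with hs
    have huV : u ∈ V := h.root_mem
    have hwW : ∀ w ∈ s, w ∈ W w := fun w hw => (hW w hw).root_mem
    have hEV := h.edge
    have hFW : ∀ w ∈ s, ∀ f ∈ F w, f ⊆ W w ∧ f.Nonempty := fun w hw => (hW w hw).edge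
    have huW : ∀ w ∈ s, u ∉ W w := fun w hw => Finset.disjoint_left.1 (hd w hw) huV
    have hVe : ∀ x ∈ V, x ∈ e → x = u := fun x hx hxe => by
      by_contra hne
      have hxs : x ∈ s := Finset.mem_erase.2 ⟨hne, hxe⟩
      exact Finset.disjoint_left.1 (hd x hxs) hx (hwW x hxs)
    have hWe : ∀ w ∈ s, ∀ x ∈ W w, x ∈ e → x = w := fun w hw x hx hxe => by
      by_contra hne
      have hxs : x ∈ s := Finset.mem_erase.2 ⟨fun h => huW w hw (h ▸ hx), hxe⟩
      exact Finset.disjoint_left.1 (hdd x hxs w hw hne) (hwW x hxs) hx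
    have heE : e ∉ E := fun he => by
      have hc : 0 < s.card := by rw [hs, Finset.card_erase_of_mem hu]; omega
      obtain ⟨w, hw⟩ := Finset.card_pos.1 hc
      have hwe := Finset.mem_erase.1 hw
      exact hwe.1 (hVe w ((hEV e he).1 hwe.2) hwe.2)
    have heF : ∀ w ∈ s, e ∉ F w := fun w hw he => huW w hw ((hFW w hw e he).1 hu)
    have heEF : e ∉ E ∪ s.biUnion F := by
      simp only [Finset.mem_union, Finset.mem_biUnion, not_or, not_exists, not_and]
      exact ⟨heE, heF⟩
    have hdVF : ∀ w ∈ s, ∀ f ∈ F w, ∀ x ∈ V, x ∉ f := fun w hw f hf x hx hxf =>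
      Finset.disjoint_left.1 (hd w hw) hx ((hFW w hw f hf).1 hxf)
    -- The eigenvalue equations inside the old tree and inside each branch at `e`.
    have hold := ih (fun v hv => hp v (Finset.mem_union_left _ hv)) fun v hv => by
      obtain ⟨hvu, hvV⟩ := Finset.mem_erase.1 hv
      rw [heig v (Finset.mem_erase.2 ⟨hvu, Finset.mem_union_left _ hvV⟩)]
      congr 1
      ext f
      simp only [Finset.mem_filter, Finset.mem_insert, Finset.mem_union, Finset.mem_biUnion]
      constructor
      · rintro ⟨rfl | hf | ⟨w, hw, hf⟩, hvf⟩
        · exact absurd (hVe v hvV hvf) hvu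
        · exact ⟨hf, hvf⟩
        · exact absurd hvf (hdVF w hw f hf v hvV)
      · exact fun hf => ⟨.inr (.inl hf.1), hf.2⟩
    have hmemF : ∀ w ∈ s, ∀ v ∈ W w, ∀ f ∈ E ∪ s.biUnion F, v ∈ f → f ∈ F w := by
      intro w hw v hv f hf hvf
      rcases Finset.mem_union.1 hf with hf | hf
      · exact absurd hv (Finset.disjoint_left.1 (hd w hw) ((hEV f hf).1 hvf))
      · obtain ⟨w', hw', hf⟩ := Finset.mem_biUnion.1 hf
        by_cases hne : w' = w
        · exact hne ▸ hf
        · exact absurd hv (Finset.disjoint_left.1 (hdd w' hw' w hw hne) ((hFW w' hw' f hf).1 hvf))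
    have hbr := fun w (hw : w ∈ s) => ihW w hw
      (fun v hv => hp v (Finset.mem_union_right _ (Finset.mem_biUnion.2 ⟨w, hw, hv⟩)))
      fun v hv => by
        obtain ⟨hvw, hvW⟩ := Finset.mem_erase.1 hv
        rw [heig v (Finset.mem_erase.2 ⟨fun h => huW w hw (h ▸ hvW),
          Finset.mem_union_right _ (Finset.mem_biUnion.2 ⟨w, hw, hvW⟩)⟩)]
        congr 1
        ext f
        rw [Finset.mem_filter, Finset.mem_filter, Finset.mem_insert]
        constructor
        · rintro ⟨rfl | hf, hvf⟩
          · exact absurd (hWe w hw v hvW hvf) hvw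
          · exact ⟨hmemF w hw v hvW f hf hvf, hvf⟩
        · exact fun hf => ⟨.inr (Finset.mem_union_right _
            (Finset.mem_biUnion.2 ⟨w, hw, hf.1⟩)), hf.2⟩
    have hpw : ∀ w ∈ s, p w ≠ 0 := fun w hw =>
      hp w (Finset.mem_union_right _ (Finset.mem_biUnion.2 ⟨w, hw, hwW w hw⟩))
    have hpu : p u ≠ 0 := hp u (Finset.mem_union_left _ huV)
    have hpe : ∏ w ∈ e, p w = p u * ∏ w ∈ s, p w := (Finset.mul_prod_erase e p hu).symm
    have hps : ∏ w ∈ s, p w ≠ 0 := Finset.prod_ne_zero_iff.2 hpw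
    have hpe0 : ∏ w ∈ e, p w ≠ 0 := hpe ▸ mul_ne_zero hpu hps
    -- `p_e φ(T_w - w) = p_w ^ k φ(T_w)` for each branch.
    have hkey : ∀ w ∈ s, (∏ x ∈ e, p x)
          * matchSum ((W w).erase w) ((F w).filter (fun f => w ∉ f)) z
        = p w ^ k * matchSum (W w) (F w) z := by
      intro w hw
      have hwe := Finset.mem_erase.1 hw
      have heq := heig w (Finset.mem_erase.2 ⟨hwe.1,
        Finset.mem_union_right _ (Finset.mem_biUnion.2 ⟨w, hw, hwW w hw⟩)⟩)
      have hfil : (insert e (E ∪ s.biUnion F)).filter (fun f => w ∈ f)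
          = insert e ((F w).filter (fun f => w ∈ f)) := by
        ext f
        rw [Finset.mem_filter, Finset.mem_insert, Finset.mem_insert, Finset.mem_filter]
        constructor
        · rintro ⟨rfl | hf, hwf⟩
          · exact .inl rfl
          · exact .inr ⟨hmemF w hw w (hwW w hw) f hf hwf, hwf⟩
        · rintro (rfl | hf)
          · exact ⟨.inl rfl, hwe.2⟩
          · exact ⟨.inr (Finset.mem_union_right _
              (Finset.mem_biUnion.2 ⟨w, hw, hf.1⟩)), hf.2⟩
      rw [hfil, Finset.sum_insert (fun h => heF w hw (Finset.mem_filter.1 h).1)] at heq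
      have h3 := (hbr w hw).2.2
      linear_combination
        (-matchSum ((W w).erase w) ((F w).filter (fun f => w ∉ f)) z) * heq - h3
    have hA0 : ∏ w ∈ s, matchSum (W w) (F w) z ≠ 0 := by
      refine Finset.prod_ne_zero_iff.2 fun w hw h0 => ?_
      have := hkey w hw
      rw [h0, mul_zero] at this
      exact mul_ne_zero hpe0 (hbr w hw).1 this
    have hprod : (∏ w ∈ e, p w) * ∏ w ∈ s, matchSum (W w) (F w) z
        = p u ^ k * ∏ w ∈ s, matchSum ((W w).erase w) ((F w).filter (fun f => w ∉ f)) z := by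
      have h1 := Finset.prod_congr (rfl : s = s) hkey
      rw [Finset.prod_mul_distrib, Finset.prod_mul_distrib, Finset.prod_const,
        Finset.prod_pow] at h1
      have hc : s.card + 1 = k := by rw [hs, Finset.card_erase_add_one hu, hk]
      -- `k` factors `p_e` on the left against `∏ p_w ^ k = (p_e / p_u) ^ k`.
      have h2 : (∏ w ∈ s, p w) ^ k * ((∏ w ∈ e, p w) * ∏ w ∈ s, matchSum (W w) (F w) z)
          = (∏ w ∈ s, p w) ^ k * (p u ^ k
            * ∏ w ∈ s, matchSum ((W w).erase w) ((F w).filter (fun f => w ∉ f)) z) := by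
        rw [mul_left_comm, ← h1, ← mul_assoc, ← pow_succ', hc, hpe]
        ring
      exact mul_left_cancel₀ (pow_ne_zero _ hps) h2
    have hEu : ∀ f ∈ E.filter (fun f => u ∉ f), f ⊆ V.erase u ∧ f.Nonempty := fun f hf => by
      obtain ⟨hf, huf⟩ := Finset.mem_filter.1 hf
      exact ⟨Finset.subset_erase.2 ⟨(hEV f hf).1, huf⟩, (hEV f hf).2⟩
    -- Factorization of `φ(T - u)`.
    have hB : matchSum ((V ∪ s.biUnion W).erase u)
          ((insert e (E ∪ s.biUnion F)).filter (fun f => u ∉ f)) z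
        = matchSum (V.erase u) (E.filter (fun f => u ∉ f)) z
          * ∏ w ∈ s, matchSum (W w) (F w) z := by
      rw [← matchSum_union_biUnion s V (V.erase u) _ W W F z hd hdd (Finset.erase_subset _ _)
        (fun _ _ => subset_rfl) hEu hFW]
      congr 1
      · rw [Finset.erase_union_distrib, Finset.erase_eq_of_notMem (s := s.biUnion W)]
        simpa using huW
      · rw [Finset.filter_insert, if_neg (not_not.2 hu), Finset.filter_union,
          Finset.filter_true_of_mem (s := s.biUnion F)]
        intro f hf
        obtain ⟨w, hw, hf⟩ := Finset.mem_biUnion.1 hf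
        exact hdVF w hw f hf u huV
    -- Factorization of `φ(T - e)`.
    have hE : matchSum ((V ∪ s.biUnion W) \ e)
          ((E ∪ s.biUnion F).filter (fun f => Disjoint f e)) z
        = matchSum (V.erase u) (E.filter (fun f => u ∉ f)) z
          * ∏ w ∈ s, matchSum ((W w).erase w) ((F w).filter (fun f => w ∉ f)) z := by
      rw [← matchSum_union_biUnion s V (V.erase u) _ W (fun w => (W w).erase w)
        (fun w => (F w).filter (fun f => w ∉ f)) z hd hdd (Finset.erase_subset _ _)
        (fun _ _ => Finset.erase_subset _ _) hEu]
      · congr 1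
        · ext x
          simp only [Finset.mem_sdiff, Finset.mem_union, Finset.mem_biUnion, Finset.mem_erase]
          constructor
          · rintro ⟨hx | ⟨w, hw, hx⟩, hxe⟩
            · exact .inl ⟨fun h => hxe (h ▸ hu), hx⟩
            · exact .inr ⟨w, hw, fun h => hxe (h ▸ (Finset.mem_erase.1 hw).2), hx⟩
          · rintro (⟨hxu, hx⟩ | ⟨w, hw, hxw, hx⟩)
            · exact ⟨.inl hx, fun hxe => hxu (hVe x hx hxe)⟩
            · exact ⟨.inr ⟨w, hw, hx⟩, fun hxe => hxw (hWe w hw x hx hxe)⟩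
        · ext f
          simp only [Finset.mem_filter, Finset.mem_union, Finset.mem_biUnion]
          constructor
          · rintro ⟨hf | ⟨w, hw, hf⟩, hfe⟩
            · exact .inl ⟨hf, fun huf => Finset.disjoint_left.1 hfe huf hu⟩
            · exact .inr ⟨w, hw, hf, fun hwf =>
                Finset.disjoint_left.1 hfe hwf (Finset.mem_erase.1 hw).2⟩
          · rintro (⟨hf, huf⟩ | ⟨w, hw, hf, hwf⟩)
            · exact ⟨.inl hf, Finset.disjoint_left.2 fun x hxf hxe =>
                huf (hVe x ((hEV f hf).1 hxf) hxe ▸ hxf)⟩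
            · exact ⟨.inr ⟨w, hw, hf⟩, Finset.disjoint_left.2 fun x hxf hxe =>
                hwf (hWe w hw x ((hFW w hw f hf).1 hxf) hxe ▸ hxf)⟩
      · intro w hw f hf
        obtain ⟨hf, hwf⟩ := Finset.mem_filter.1 hf
        exact ⟨Finset.subset_erase.2 ⟨(hFW w hw f hf).1, hwf⟩, (hFW w hw f hf).2⟩
    have hA : matchSum (V ∪ s.biUnion W) (insert e (E ∪ s.biUnion F)) z
        = matchSum V E z * (∏ w ∈ s, matchSum (W w) (F w) z)
          - matchSum (V.erase u) (E.filter (fun f => u ∉ f)) z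
            * ∏ w ∈ s, matchSum ((W w).erase w) ((F w).filter (fun f => w ∉ f)) z := by
      rw [matchSum_insert _ _ _ _ heEF, hE, matchSum_union_biUnion s V V _ W W F z hd hdd
        subset_rfl (fun _ _ => subset_rfl) hEV hFW]
    rw [hB]
    refine ⟨mul_ne_zero hold.1 hA0, ?_, ?_⟩
    · intro f hf huf
      rcases Finset.mem_insert.1 hf with rfl | hf
      · rw [Finset.filter_insert, if_neg, hE]
        · linear_combination
            (matchSum (V.erase u) (E.filter (fun f => u ∉ f)) z) * hprod
        · exact fun h => Finset.disjoint_left.1 h hu hu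
      · have hfE : f ∈ E := by
          rcases Finset.mem_union.1 hf with hf | hf
          · exact hf
          · obtain ⟨w, hw, hf⟩ := Finset.mem_biUnion.1 hf
            exact absurd huf (hdVF w hw f hf u huV)
        have hfV := (hEV f hfE).1
        have hC : matchSum ((V ∪ s.biUnion W) \ f)
              ((insert e (E ∪ s.biUnion F)).filter (fun g => Disjoint g f)) z
            = matchSum (V \ f) (E.filter (fun g => Disjoint g f)) z
              * ∏ w ∈ s, matchSum (W w) (F w) z := by
          rw [← matchSum_union_biUnion s V (V \ f) _ W W F z hd hdd Finset.sdiff_subset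
            (fun _ _ => subset_rfl) _ hFW]
          · congr 1
            · rw [Finset.union_sdiff_distrib,
                Finset.sdiff_eq_self_of_disjoint (s := s.biUnion W)]
              rw [Finset.disjoint_biUnion_left]
              exact fun w hw => ((hd w hw).mono_left hfV).symm
            · rw [Finset.filter_insert, if_neg (fun h => Finset.disjoint_left.1 h hu huf),
                Finset.filter_union, Finset.filter_true_of_mem (s := s.biUnion F)]
              intro g hg
              obtain ⟨w, hw, hg⟩ := Finset.mem_biUnion.1 hg
              exact ((hd w hw).mono hfV (hFW w hw g hg).1).symm
          · intro g hg
            obtain ⟨hg, hgf⟩ := Finset.mem_filter.1 hg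
            exact ⟨Finset.subset_sdiff.2 ⟨(hEV g hg).1, hgf⟩, (hEV g hg).2⟩
        rw [hC]
        linear_combination (∏ w ∈ s, matchSum (W w) (F w) z) * hold.2.1 f hfE huf
    · have hfil : (insert e (E ∪ s.biUnion F)).filter (fun f => u ∈ f)
          = insert e (E.filter (fun f => u ∈ f)) := by
        rw [Finset.filter_insert, if_pos hu, Finset.filter_union,
          Finset.filter_false_of_mem (s := s.biUnion F), Finset.union_empty]
        intro f hf
        obtain ⟨w, hw, hf⟩ := Finset.mem_biUnion.1 hf
        exact hdVF w hw f hf u huV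
      rw [hfil, Finset.sum_insert (fun h => heE (Finset.mem_filter.1 h).1), hA]
      linear_combination (∏ w ∈ s, matchSum (W w) (F w) z) * hold.2.2
        + (matchSum (V.erase u) (E.filter (fun f => u ∉ f)) z) * hprod

theorem IsHypertree.card_edge {α : Type*} [DecidableEq α] {k : ℕ} {V : Finset α}
    {E : Finset (Finset α)} (h : IsHypertree k V E) : ∀ f ∈ E, f.card = k := by
  induction h with
  | single v => simp
  | attach e h hk _ ih =>
    intro f hf
    rcases Finset.mem_insert.1 hf with rfl | hf
    · exact hk
    · exact ih f hf

open Classical in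
/-- For a `k`-uniform hypertree `T` with vertex `u` and a point `p` of the variety defined
by the eigenvalue equations with `x_u = 1`, all of whose coordinates are nonzero, one has
`p_{e∖{u}} = φ_T−e(λ)/φ_{T−u}(λ)` for each edge `e` containing `u`. -/
theorem stmt10 {α : Type*} [DecidableEq α] (k : ℕ)
    (V : Finset α) (E : Finset (Finset α)) (hT : IsHypertree k V E)
    (u : α) (hu : u ∈ V) (lam : ℂ) (p : α → ℂ)
    (hpu : p u = 1) (hp0 : ∀ v ∈ V, p v ≠ 0)
    (heig : ∀ v ∈ V.erase u,
      lam * (p v) ^ (k - 1)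
        = ∑ e ∈ E.filter (fun e => v ∈ e), ∏ w ∈ e.erase v, p w)
    (hden : mPolyC (V.erase u).card k (E.filter (fun e => u ∉ e)) lam ≠ 0)
    (e : Finset α) (he : e ∈ E) (hue : u ∈ e) :
    ∏ w ∈ e.erase u, p w
      = mPolyC (V \ e).card k (E.filter (fun f => Disjoint f e)) lam
        / mPolyC (V.erase u).card k (E.filter (fun f => u ∉ f)) lam := by
  have hcard := hT.card_edge
  have hedge := (hT.rooted u hu).edge
  have hk1 : 1 ≤ k := hcard e he ▸ Finset.card_pos.2 ⟨u, hue⟩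
  have hB : mPolyC (V.erase u).card k (E.filter (fun f => u ∉ f)) lam
      = matchSum (V.erase u) (E.filter (fun f => u ∉ f)) lam := by
    refine mPolyC_eq_matchSum k _ _ lam (fun f hf => hcard f (Finset.mem_filter.1 hf).1) ?_
    intro f hf
    obtain ⟨hf, huf⟩ := Finset.mem_filter.1 hf
    exact Finset.subset_erase.2 ⟨(hedge f hf).1, huf⟩
  rcases hk1.eq_or_lt with hk | hk2
  -- A `1`-uniform edge at `u` is the loop `{u}`, so numerator and denominator agree.
  · have he1 : e = {u} := by
      obtain ⟨x, rfl⟩ := Finset.card_eq_one.1 ((hcard e he).trans hk.symm)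
      rw [Finset.mem_singleton.1 hue]
    subst he1
    simp only [Finset.disjoint_singleton_right, Finset.sdiff_singleton_eq_erase,
      Finset.erase_singleton, Finset.prod_empty]
    exact (div_self hden).symm
  · have hE : mPolyC (V \ e).card k (E.filter (fun f => Disjoint f e)) lam
        = matchSum (V \ e) (E.filter (fun f => Disjoint f e)) lam := by
      refine mPolyC_eq_matchSum k _ _ lam (fun f hf => hcard f (Finset.mem_filter.1 hf).1) ?_
      intro f hf
      obtain ⟨hf, hfe⟩ := Finset.mem_filter.1 hf
      exact Finset.subset_sdiff.2 ⟨(hedge f hf).1, hfe⟩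
    have hmain := ((hT.rooted u hu).eigen hk2 lam p hp0 fun v hv => by
      -- The eigenvalue equation at `v` multiplied by `p v`.
      have h1 : p v ^ k = p v * p v ^ (k - 1) := by rw [← pow_succ', Nat.sub_add_cancel hk1]
      rw [h1, mul_left_comm, heig v hv, Finset.mul_sum]
      refine Finset.sum_congr ?_ fun f hf =>
        Finset.mul_prod_erase f p (Finset.mem_filter.1 hf).2
      congr).2.1 e he hue
    have hpe : ∏ w ∈ e, p w = ∏ w ∈ e.erase u, p w := by
      rw [← Finset.mul_prod_erase e p hue, hpu, one_mul]
    rw [eq_div_iff hden]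
    rw [hB, hE]
    rw [hpe, hpu, one_pow, one_mul] at hmain
    convert hmain
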